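/- arXiv:1004.0151 — 3 statements merged into one kernel-verified Lean document; each statement's English description precedes it below -/
import Mathlib

section
/- Let a > 0 be real and λ ∈ ℂ ∖ [0,∞). Then the Lebesgue integral ∫₀^∞ sin²(ax)/(x² − λ) dx converges and equals (iπ/(4√λ)) (1 − e^{2ia√λ}). -/
open MeasureTheory Filter

/-- The branch of the complex square root with positive imaginary part
(for `z ∉ [0,∞)`): `√z = i · (−z)^{1/2}` where `(−z)^{1/2}` is the principal root. -/
noncomputable def sqrtUpper (z : ℂ) : ℂ := Complex.I * (-z) ^ ((1 : ℂ) / 2)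

lemma aux_ne (w : ℂ) (hw : 0 < w.re) (x : ℝ) : (x : ℂ) ^ 2 + w ^ 2 ≠ 0 := by
  intro h
  have h1 : (w + Complex.I * x) * (w - Complex.I * x) = 0 := by
    ring_nf
    rw [Complex.I_sq]
    linear_combination h
  rcases mul_eq_zero.1 h1 with h2 | h2
  · have := congrArg Complex.re h2
    simp at this
    linarith
  · have := congrArg Complex.re h2
    simp at this
    linarith

lemma aux_integrable (w : ℂ) (hw : 0 < w.re) :
    Integrable (fun x : ℝ => ((x : ℂ) ^ 2 + w ^ 2)⁻¹) := by
  have hc : Continuous (fun x : ℝ => ((x : ℂ) ^ 2 + w ^ 2)⁻¹) := by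
    apply Continuous.inv₀
    · fun_prop
    · exact aux_ne w hw
  refine hc.locallyIntegrable.integrable_of_isBigO_cocompact (g := fun x : ℝ => (1 + x ^ 2)⁻¹) ?_
    (integrable_inv_one_add_sq.integrableAtFilter _)
  refine Asymptotics.IsBigO.of_bound 2 ?_
  have ht : Tendsto (fun x : ℝ => ‖x‖) (cocompact ℝ) atTop := tendsto_norm_cocompact_atTop
  filter_upwards [ht.eventually_ge_atTop (2 * ‖w ^ 2‖ + 1)] with x hx
  have h0 : (0:ℝ) ≤ ‖w ^ 2‖ := norm_nonneg _
  have h1 : 2 * ‖w ^ 2‖ + 1 ≤ x ^ 2 := by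
    rw [← sq_abs x, ← Real.norm_eq_abs]
    nlinarith
  have h2 : x ^ 2 - ‖w ^ 2‖ ≤ ‖(x : ℂ) ^ 2 + w ^ 2‖ := by
    have := norm_sub_norm_le ((x : ℂ) ^ 2) (-w ^ 2)
    have h3 : ‖(x : ℂ) ^ 2‖ = x ^ 2 := by simp
    have h4 : ‖-w ^ 2‖ = ‖w ^ 2‖ := by simp
    rw [h3] at this
    simpa using this
  rw [norm_inv, norm_inv, Real.norm_of_nonneg (by positivity : (0:ℝ) ≤ 1 + x ^ 2)]
  rw [← div_eq_mul_inv, inv_le_comm₀ (by linarith) (by positivity), inv_div]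
  linarith

lemma aux_Ioi (w : ℂ) (hw : 0 < w.re) (s : ℝ) :
    IntegrableOn (fun t : ℝ => Complex.exp (2 * Real.pi * (-w - Complex.I * s) * t)) (Set.Ioi 0) ∧
    ∫ t in Set.Ioi (0:ℝ), Complex.exp (2 * Real.pi * (-w - Complex.I * s) * t)
      = 1 / (2 * Real.pi * (w + Complex.I * s)) := by
  have hre : (2 * Real.pi * (-w - Complex.I * s) : ℂ).re < 0 := by
    have : (2 * Real.pi * (-w - Complex.I * s) : ℂ).re = - (2 * Real.pi * w.re) := by
      simp
    rw [this]
    have := Real.pi_pos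
    have : 0 < 2 * Real.pi * w.re := by positivity
    linarith
  refine ⟨integrableOn_exp_mul_complex_Ioi hre 0, ?_⟩
  rw [integral_exp_mul_complex_Ioi hre 0]
  simp only [Complex.ofReal_zero, mul_zero, Complex.exp_zero]
  rw [show (2 * Real.pi * (-w - Complex.I * s) : ℂ) = -(2 * Real.pi * (w + Complex.I * s)) by ring,
    neg_div_neg_eq]

lemma aux_Iic (w : ℂ) (hw : 0 < w.re) (s : ℝ) :
    IntegrableOn (fun t : ℝ => Complex.exp (2 * Real.pi * (w - Complex.I * s) * t)) (Set.Iic 0) ∧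
    ∫ t in Set.Iic (0:ℝ), Complex.exp (2 * Real.pi * (w - Complex.I * s) * t)
      = 1 / (2 * Real.pi * (w - Complex.I * s)) := by
  have hre : 0 < (2 * Real.pi * (w - Complex.I * s) : ℂ).re := by
    have : (2 * Real.pi * (w - Complex.I * s) : ℂ).re = (2 * Real.pi * w.re) := by
      simp
    rw [this]
    have := Real.pi_pos
    positivity
  refine ⟨integrableOn_exp_mul_complex_Iic hre 0, ?_⟩
  rw [integral_exp_mul_complex_Iic hre 0]
  simp

lemma aux_fourier (w : ℂ) (hw : 0 < w.re) (s : ℝ) :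
    Integrable (fun t : ℝ => Complex.exp (-2 * Real.pi * Complex.I * s * t) *
      Complex.exp (-2 * Real.pi * w * |t|)) ∧
    ∫ t : ℝ, Complex.exp (-2 * Real.pi * Complex.I * s * t) *
      Complex.exp (-2 * Real.pi * w * |t|) = w / Real.pi * ((s : ℂ) ^ 2 + w ^ 2)⁻¹ := by
  have e1 : Set.EqOn (fun t : ℝ => Complex.exp (2 * Real.pi * (-w - Complex.I * s) * t))
      (fun t : ℝ => Complex.exp (-2 * Real.pi * Complex.I * s * t) *
      Complex.exp (-2 * Real.pi * w * |t|)) (Set.Ioi 0) := by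
    intro t ht
    simp only [← Complex.exp_add, abs_of_pos (Set.mem_Ioi.1 ht)]
    congr 1; ring
  have e2 : Set.EqOn (fun t : ℝ => Complex.exp (2 * Real.pi * (w - Complex.I * s) * t))
      (fun t : ℝ => Complex.exp (-2 * Real.pi * Complex.I * s * t) *
      Complex.exp (-2 * Real.pi * w * |t|)) (Set.Iic 0) := by
    intro t ht
    simp only [← Complex.exp_add, abs_of_nonpos (Set.mem_Iic.1 ht)]
    congr 1; push_cast; ring
  obtain ⟨i1, v1⟩ := aux_Ioi w hw s
  obtain ⟨i2, v2⟩ := aux_Iic w hw s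
  have j1 := i1.congr_fun e1 measurableSet_Ioi
  have j2 := i2.congr_fun e2 measurableSet_Iic
  rw [setIntegral_congr_fun measurableSet_Ioi e1] at v1
  rw [setIntegral_congr_fun measurableSet_Iic e2] at v2
  constructor
  · rw [← integrableOn_univ, ← Set.Iic_union_Ioi (a := (0:ℝ))]
    exact j2.union j1
  · rw [← intervalIntegral.integral_Iic_add_Ioi j2 j1, v1, v2]
    have hne := aux_ne w hw s
    have hf : (s : ℂ) ^ 2 + w ^ 2 = (w + Complex.I * s) * (w - Complex.I * s) := by
      ring_nf
      rw [Complex.I_sq]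
      ring
    rw [hf] at hne ⊢
    have h1 := left_ne_zero_of_mul hne
    have h2 := right_ne_zero_of_mul hne
    have h3 : (Real.pi : ℂ) ≠ 0 := by exact_mod_cast Real.pi_ne_zero
    field_simp
    ring

open FourierTransform in
lemma aux_inv (w : ℂ) (hw : 0 < w.re) (b : ℝ) :
    ∫ x : ℝ, Complex.exp (2 * Complex.I * b * x) * ((x : ℂ) ^ 2 + w ^ 2)⁻¹
      = Real.pi / w * Complex.exp (-2 * w * |b|) := by
  have h3 : (Real.pi : ℂ) ≠ 0 := by exact_mod_cast Real.pi_ne_zero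
  have hw0 : w ≠ 0 := by rintro rfl; simp at hw
  set f : ℝ → ℂ := fun t => Complex.exp (-2 * Real.pi * w * |t|) with hf
  have hc : Continuous f := by fun_prop
  have hfi : Integrable f := by simpa [hf] using (aux_fourier w hw 0).1
  have hF : 𝓕 f = fun s : ℝ => w / Real.pi * ((s : ℂ) ^ 2 + w ^ 2)⁻¹ := by
    ext s
    rw [Real.fourier_real_eq_integral_exp_smul, ← (aux_fourier w hw s).2]
    congr 1; ext t
    simp only [smul_eq_mul, hf]
    congr 2; push_cast; ring
  have hFi : Integrable (𝓕 f) := by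
    rw [hF]; exact (aux_integrable w hw).const_mul _
  have key := congrFun (hc.fourierInv_fourier_eq hfi hFi) (b / Real.pi)
  rw [Real.fourierInv_eq', hF] at key
  have : ∫ x : ℝ, Complex.exp (2 * Complex.I * b * x) * ((x : ℂ) ^ 2 + w ^ 2)⁻¹
      = Real.pi / w * f (b / Real.pi) := by
    rw [← key, ← integral_const_mul]
    congr 1; ext x
    have : ((2 * Real.pi * inner ℝ x (b / Real.pi) : ℝ) : ℂ) * Complex.I
        = 2 * Complex.I * b * x := by
      simp
      field_simp
    rw [this, smul_eq_mul]
    field_simp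
  rw [this, hf]
  simp only [abs_div, abs_of_pos Real.pi_pos]
  congr 2
  push_cast
  field_simp

lemma aux_main (a : ℝ) (ha : 0 < a) (w : ℂ) (hw : 0 < w.re) :
    Integrable (fun x : ℝ => (Real.sin (a * x) : ℂ) ^ 2 * ((x : ℂ) ^ 2 + w ^ 2)⁻¹) ∧
    ∫ x in Set.Ioi (0 : ℝ), (Real.sin (a * x) : ℂ) ^ 2 * ((x : ℂ) ^ 2 + w ^ 2)⁻¹
      = Real.pi / (4 * w) * (1 - Complex.exp (-2 * a * w)) := by
  have hE : ∀ b : ℝ, Integrable (fun x : ℝ =>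
      Complex.exp (2 * Complex.I * b * x) * ((x : ℂ) ^ 2 + w ^ 2)⁻¹) := by
    intro b
    refine (aux_integrable w hw).bdd_mul (c := 1) (Continuous.aestronglyMeasurable (by fun_prop)) ?_
    refine Eventually.of_forall fun x => ?_
    rw [Complex.norm_exp]
    simp
  have hs : (fun x : ℝ => (Real.sin (a * x) : ℂ) ^ 2 * ((x : ℂ) ^ 2 + w ^ 2)⁻¹) = fun x : ℝ =>
      (1 / 2 : ℂ) * (Complex.exp (2 * Complex.I * (0:ℝ) * x) * ((x : ℂ) ^ 2 + w ^ 2)⁻¹)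
      - ((1 / 4 : ℂ) * (Complex.exp (2 * Complex.I * (a:ℝ) * x) * ((x : ℂ) ^ 2 + w ^ 2)⁻¹)
      + (1 / 4 : ℂ) * (Complex.exp (2 * Complex.I * (-a:ℝ) * x) * ((x : ℂ) ^ 2 + w ^ 2)⁻¹)) := by
    ext x
    have h1 : Complex.exp (2 * Complex.I * (a:ℝ) * x) = Complex.exp (a * x * Complex.I) ^ 2 := by
      rw [← Complex.exp_nat_mul]; congr 1; push_cast; ring
    have h2 : Complex.exp (2 * Complex.I * (-a:ℝ) * x) = Complex.exp (-(a * x) * Complex.I) ^ 2 := by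
      rw [← Complex.exp_nat_mul]; congr 1; push_cast; ring
    have h3 : Complex.exp (-(a * x) * Complex.I) * Complex.exp (a * x * Complex.I) = 1 := by
      rw [← Complex.exp_add]; simp
    rw [h1, h2, Complex.ofReal_sin, Complex.sin]
    push_cast
    simp only [mul_zero, zero_mul, Complex.exp_zero]
    generalize Complex.exp (a * x * Complex.I) = p at *
    generalize Complex.exp (-(a * x) * Complex.I) = q at *
    linear_combination ((x : ℂ) ^ 2 + w ^ 2)⁻¹ * ((q - p) ^ 2 / 4 * Complex.I_sq + h3 / 2)
  have hI : Integrable (fun x : ℝ => (Real.sin (a * x) : ℂ) ^ 2 * ((x : ℂ) ^ 2 + w ^ 2)⁻¹) := by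
    rw [hs]
    exact ((hE 0).const_mul _).sub (((hE a).const_mul _).add ((hE (-a)).const_mul _))
  refine ⟨hI, ?_⟩
  have hfull : ∫ x : ℝ, (Real.sin (a * x) : ℂ) ^ 2 * ((x : ℂ) ^ 2 + w ^ 2)⁻¹
      = Real.pi / (2 * w) * (1 - Complex.exp (-2 * a * w)) := by
    have hadd : Integrable (fun x : ℝ =>
        (1 / 4 : ℂ) * (Complex.exp (2 * Complex.I * (a:ℝ) * x) * ((x : ℂ) ^ 2 + w ^ 2)⁻¹)
        + (1 / 4 : ℂ) * (Complex.exp (2 * Complex.I * (-a:ℝ) * x) * ((x : ℂ) ^ 2 + w ^ 2)⁻¹)) :=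
      ((hE a).const_mul _).add ((hE (-a)).const_mul _)
    rw [hs, integral_sub ((hE 0).const_mul _) hadd,
      integral_add ((hE a).const_mul _) ((hE (-a)).const_mul _), integral_const_mul,
      integral_const_mul, integral_const_mul, aux_inv w hw, aux_inv w hw, aux_inv w hw]
    rw [abs_neg, abs_of_pos ha, abs_zero,
      show (-2 * w * (a:ℝ) : ℂ) = -2 * a * w by ring]
    simp only [Complex.ofReal_zero, mul_zero, Complex.exp_zero]
    ring
  have hsym : ∫ x in Set.Iic (0 : ℝ), (Real.sin (a * x) : ℂ) ^ 2 * ((x : ℂ) ^ 2 + w ^ 2)⁻¹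
      = ∫ x in Set.Ioi (0 : ℝ), (Real.sin (a * x) : ℂ) ^ 2 * ((x : ℂ) ^ 2 + w ^ 2)⁻¹ := by
    have := integral_comp_neg_Iic (0:ℝ)
      (fun x : ℝ => (Real.sin (a * x) : ℂ) ^ 2 * ((x : ℂ) ^ 2 + w ^ 2)⁻¹)
    rw [neg_zero] at this
    rw [← this]
    congr 1; ext x
    simp
  rw [← intervalIntegral.integral_Iic_add_Ioi hI.integrableOn hI.integrableOn, hsym] at hfull
  linear_combination hfull / 2

/-- For real `a > 0` and `λ ∉ [0,∞)`, the Lebesgue integral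
`∫₀^∞ sin²(ax)/(x² − λ) dx` converges and equals `(iπ/(4√λ))(1 − e^{2ia√λ})`. -/
theorem stmt5 (a : ℝ) (ha : 0 < a) (lam : ℂ) (hlam : ∀ t : ℝ, 0 ≤ t → lam ≠ (t : ℂ)) :
    IntegrableOn (fun x : ℝ => (Real.sin (a * x) : ℂ) ^ 2 * ((x : ℂ) ^ 2 - lam)⁻¹)
      (Set.Ioi 0) ∧
    ∫ x in Set.Ioi (0 : ℝ), (Real.sin (a * x) : ℂ) ^ 2 * ((x : ℂ) ^ 2 - lam)⁻¹
      = Complex.I * (Real.pi : ℂ) / (4 * sqrtUpper lam) *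
          (1 - Complex.exp (2 * Complex.I * (a : ℂ) * sqrtUpper lam)) := by
  unfold sqrtUpper
  have hl0 : -lam ≠ 0 := by
    have := hlam 0 le_rfl
    simpa using this
  have harg : (-lam).arg ≠ Real.pi := by
    intro h
    rw [Complex.arg_eq_pi_iff] at h
    have h1 : 0 < lam.re := by simpa using h.1
    have h2 : lam.im = 0 := by simpa using h.2
    exact hlam lam.re h1.le (Complex.ext (by simp) (by simp [h2]))
  set w : ℂ := (-lam) ^ ((1 : ℂ) / 2) with hwdef
  have hw2 : w ^ 2 = -lam := by
    rw [hwdef, one_div]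
    exact Complex.cpow_ofNat_inv_pow _ 2
  have hw : 0 < w.re := by
    rw [hwdef, Complex.cpow_def_of_ne_zero hl0, Complex.exp_re]
    apply mul_pos (Real.exp_pos _)
    have him : (Complex.log (-lam) * (1 / 2)).im = (-lam).arg / 2 := by
      rw [show (1 / 2 : ℂ) = ((1 / 2 : ℝ) : ℂ) by push_cast; rfl, Complex.im_mul_ofReal,
        Complex.log_im]
      ring
    rw [him]
    have h1 := Complex.neg_pi_lt_arg (-lam)
    have h2 := lt_of_le_of_ne (Complex.arg_le_pi (-lam)) harg
    exact Real.cos_pos_of_mem_Ioo ⟨by linarith, by linarith⟩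
  have hw0 : w ≠ 0 := by
    intro h
    rw [h] at hw
    simp at hw
  have hl : ∀ x : ℝ, (x : ℂ) ^ 2 - lam = (x : ℂ) ^ 2 + w ^ 2 := by
    intro x; rw [hw2]; ring
  simp only [hl]
  obtain ⟨h1, h2⟩ := aux_main a ha w hw
  refine ⟨h1.integrableOn, ?_⟩
  rw [h2, show (2 * Complex.I * (a : ℂ) * (Complex.I * w)) = -2 * a * w by
    linear_combination (2 * a * w) * Complex.I_sq]
  congr 1
  have := Complex.I_ne_zero
  field_simp
end

section
/- Let a > 0 be real and λ ∈ ℂ ∖ [0,∞). Then the Lebesgue integral ∫_{ℝ} sin²(ax)/(x² − λ)² dx converges and equals −(iπ/(4(√λ)³)) (1 − e^{2ia√λ}) + (πa/(2λ)) e^{2ia√λ}. -/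
open MeasureTheory

open Set

lemma half_line (b c : ℂ) (hb : 0 < b.re) :
    IntegrableOn (fun t : ℝ => (1 + c * t) * Complex.exp (-b * t)) (Ioi 0) ∧
    ∫ t : ℝ in Ioi 0, (1 + c * t) * Complex.exp (-b * t) = 1 / b + c / b ^ 2 := by
  have hb0 : b ≠ 0 := by
    rintro rfl
    simp at hb
  have h1 : IntegrableOn (fun t : ℝ => Complex.exp (-b * t)) (Ioi 0) :=
    integrableOn_exp_mul_complex_Ioi (by simpa using hb) 0
  have h2 : IntegrableOn (fun t : ℝ => (t : ℂ) * Complex.exp (-b * t)) (Ioi 0) := by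
    have h := integrableOn_rpow_mul_exp_neg_mul_rpow (p := 1) (s := 1) (b := b.re)
      (by norm_num) (by norm_num) hb
    refine Integrable.mono' h (Continuous.aestronglyMeasurable (by fun_prop)) ?_
    filter_upwards [ae_restrict_mem measurableSet_Ioi] with t ht
    have ht : 0 < t := ht
    simp [Complex.norm_exp, abs_of_pos ht]
  have e1 : ∫ t : ℝ in Ioi 0, Complex.exp (-b * t) = 1 / b := by
    rw [integral_exp_mul_complex_Ioi (by simpa using hb) 0]
    simp
  have e2 : ∫ t : ℝ in Ioi 0, (t : ℂ) * Complex.exp (-b * t) = 1 / b ^ 2 := by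
    have hd : ∀ t : ℝ, HasDerivAt
        (fun t : ℝ => -(1 / b) * ((t : ℂ) * Complex.exp (-b * t)) -
          (1 / b ^ 2) * Complex.exp (-b * t)) ((t : ℂ) * Complex.exp (-b * t)) t := by
      intro t
      have d1 : HasDerivAt (fun t : ℝ => (t : ℂ)) 1 t := Complex.ofRealCLM.hasDerivAt
      have d2 := (d1.const_mul (-b)).cexp
      refine (((d1.mul d2).const_mul (-(1 / b))).sub (d2.const_mul (1 / b ^ 2))).congr_deriv ?_
      field_simp
      ring
    have hlim := tendsto_zero_of_hasDerivAt_of_integrableOn_Ioi (a := 0) (fun t _ => hd t) h2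
      ((h2.const_mul (-(1 / b))).sub (h1.const_mul (1 / b ^ 2)))
    rw [integral_Ioi_of_hasDerivAt_of_tendsto' (fun t _ => hd t) h2 hlim]
    simp
  have hf : (fun t : ℝ => (1 + c * t) * Complex.exp (-b * t)) =
      fun t : ℝ => Complex.exp (-b * t) + c * ((t : ℂ) * Complex.exp (-b * t)) := by
    funext t; ring
  refine ⟨?_, ?_⟩
  · rw [hf]
    exact h1.add (h2.const_mul c)
  · rw [hf, integral_add h1 (h2.const_mul c), e1, integral_const_mul, e2]
    ring

/-- The function whose Fourier transform we compute. -/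
noncomputable def gFun (c : ℂ) (t : ℝ) : ℂ := (1 + c * (|t| : ℝ)) * Complex.exp (-c * (|t| : ℝ))

lemma gFun_cont (c : ℂ) : Continuous (gFun c) := by
  unfold gFun
  fun_prop

lemma gFun_int (c : ℂ) (hc : 0 < c.re) : Integrable (gFun c) := by
  have h : IntegrableOn (gFun c) (Ioi 0) := by
    refine (half_line c c hc).1.congr_fun (fun t ht => ?_) measurableSet_Ioi
    have ht : 0 < t := ht
    simp [gFun, abs_of_pos ht]
  have h' : IntegrableOn (gFun c) (Iio 0) := by
    have := (show IntegrableOn (gFun c) (Ioi (-0)) by simpa using h).comp_neg_Iio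
    refine this.congr_fun (fun t _ => ?_) measurableSet_Iio
    simp [gFun]
  rw [← integrableOn_univ, ← Iio_union_Ici (a := (0 : ℝ)), integrableOn_union,
    integrableOn_Ici_iff_integrableOn_Ioi]
  exact ⟨h', h⟩

lemma sq_add_ne {s : ℂ} (hs : 0 < s.re) (w : ℝ) : (w : ℂ) ^ 2 + s ^ 2 ≠ 0 := by
  have h : (w : ℂ) ^ 2 + s ^ 2 = (s + w * Complex.I) * (s - w * Complex.I) := by
    ring_nf
    simp
  rw [h]
  refine mul_ne_zero ?_ ?_ <;> intro h0 <;> have := congrArg Complex.re h0 <;> simp at this <;>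
    linarith

open FourierTransform in
lemma gFun_fourier (s : ℂ) (hs : 0 < s.re) (w : ℝ) :
    𝓕 (gFun (2 * Real.pi * s)) w
      = 2 / Real.pi * s ^ 3 * (((w : ℂ) ^ 2 + s ^ 2) ^ 2)⁻¹ := by
  set c : ℂ := 2 * Real.pi * s with hcd
  have hpi : (Real.pi : ℂ) ≠ 0 := by exact_mod_cast Real.pi_ne_zero
  have hc : 0 < c.re := by
    have : c.re = 2 * Real.pi * s.re := by simp [hcd]
    rw [this]; positivity
  have hI : Integrable (fun t : ℝ => Complex.exp (↑(-2 * Real.pi * t * w) * Complex.I) *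
      gFun c t) := by
    refine (gFun_int c hc).bdd_mul (c := 1) (Continuous.aestronglyMeasurable (by fun_prop)) ?_
    filter_upwards with t
    rw [Complex.norm_exp_ofReal_mul_I]
  rw [Real.fourier_real_eq_integral_exp_smul]
  simp only [smul_eq_mul]
  rw [← intervalIntegral.integral_Iic_add_Ioi (b := (0 : ℝ)) hI.integrableOn hI.integrableOn]
  have eneg : ∫ t : ℝ in Iic 0, Complex.exp (↑(-2 * Real.pi * t * w) * Complex.I) * gFun c t
      = ∫ t : ℝ in Ioi 0, (1 + c * t) * Complex.exp (-(c - 2 * Real.pi * w * Complex.I) * t) := by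
    have := integral_comp_neg_Iic (0 : ℝ)
      (fun t : ℝ => Complex.exp (↑(2 * Real.pi * t * w) * Complex.I) * gFun c t)
    rw [neg_zero] at this
    refine Eq.trans ?_ (this.trans ?_)
    · congr 1; funext t; simp [gFun]
    · refine setIntegral_congr_fun measurableSet_Ioi (fun t ht => ?_)
      have ht : 0 < t := ht
      simp only [gFun, abs_of_pos ht]
      rw [mul_left_comm, ← Complex.exp_add]
      congr 2; push_cast; ring
  have epos : ∫ t : ℝ in Ioi 0, Complex.exp (↑(-2 * Real.pi * t * w) * Complex.I) * gFun c t
      = ∫ t : ℝ in Ioi 0, (1 + c * t) * Complex.exp (-(c + 2 * Real.pi * w * Complex.I) * t) := by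
    refine setIntegral_congr_fun measurableSet_Ioi (fun t ht => ?_)
    have ht : 0 < t := ht
    simp only [gFun, abs_of_pos ht]
    rw [mul_left_comm, ← Complex.exp_add]
    congr 2; push_cast; ring
  have r1 : 0 < (c - 2 * Real.pi * w * Complex.I).re := by simpa using hc
  have r2 : 0 < (c + 2 * Real.pi * w * Complex.I).re := by simpa using hc
  rw [eneg, epos, (half_line _ c r1).2, (half_line _ c r2).2]
  have n1 : s - w * Complex.I ≠ 0 := by
    intro h0; have := congrArg Complex.re h0; simp at this; linarith
  have n2 : s + w * Complex.I ≠ 0 := by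
    intro h0; have := congrArg Complex.re h0; simp at this; linarith
  have h : (w : ℂ) ^ 2 + s ^ 2 = (s + w * Complex.I) * (s - w * Complex.I) := by
    ring_nf
    simp
  rw [h, show c - 2 * Real.pi * w * Complex.I = 2 * Real.pi * (s - w * Complex.I) by rw [hcd]; ring,
    show c + 2 * Real.pi * w * Complex.I = 2 * Real.pi * (s + w * Complex.I) by rw [hcd]; ring, hcd]
  generalize hu : s - w * Complex.I = u at *
  generalize hv : s + w * Complex.I = v at *
  have hs2 : s = (u + v) / 2 := by rw [← hu, ← hv]; ring
  rw [hs2]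
  field_simp
  ring

lemma kernel_int (s : ℂ) (hs : 0 < s.re) :
    Integrable (fun w : ℝ => (((w : ℂ) ^ 2 + s ^ 2) ^ 2)⁻¹) := by
  have hcont : Continuous (fun w : ℝ => (((w : ℂ) ^ 2 + s ^ 2) ^ 2)⁻¹) :=
    Continuous.inv₀ (by fun_prop) (fun w => pow_ne_zero 2 (sq_add_ne hs w))
  set x := s.re
  set y := s.im
  set m := min 1 (x ^ 2)
  have hm : 0 < m := lt_min one_pos (by positivity)
  have hbase : Integrable (fun w : ℝ => ((x ^ 2)⁻¹ * m⁻¹) * (1 + (w - y) ^ 2)⁻¹) :=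
    ((integrable_inv_one_add_sq).comp_sub_right y).const_mul _
  refine hbase.mono' hcont.aestronglyMeasurable ?_
  filter_upwards with w
  have h : (w : ℂ) ^ 2 + s ^ 2 = (s + w * Complex.I) * (s - w * Complex.I) := by
    ring_nf
    simp
  have na : ‖s + w * Complex.I‖ ^ 2 = x ^ 2 + (y + w) ^ 2 := by
    rw [← Complex.normSq_eq_norm_sq, Complex.normSq_apply]; simp [x, y]; ring
  have nb : ‖s - w * Complex.I‖ ^ 2 = x ^ 2 + (w - y) ^ 2 := by
    rw [← Complex.normSq_eq_norm_sq, Complex.normSq_apply]; simp [x, y]; ring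
  rw [norm_inv, norm_pow, h, norm_mul, mul_pow, na, nb, ← mul_inv, ← mul_inv]
  have hx : 0 < x ^ 2 := by positivity
  have m1 : m ≤ 1 := min_le_left _ _
  have m2 : m ≤ x ^ 2 := min_le_right _ _
  apply inv_anti₀ (by positivity)
  rw [mul_assoc]
  apply mul_le_mul <;> nlinarith [sq_nonneg (y + w), sq_nonneg (w - y)]

open FourierTransform in
lemma exp_integral (s : ℂ) (hs : 0 < s.re) (v : ℝ) :
    ∫ w : ℝ, Complex.exp (2 * Real.pi * v * w * Complex.I) * (((w : ℂ) ^ 2 + s ^ 2) ^ 2)⁻¹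
      = Real.pi / (2 * s ^ 3) * gFun (2 * Real.pi * s) v := by
  have hpi : (Real.pi : ℂ) ≠ 0 := by exact_mod_cast Real.pi_ne_zero
  have hs0 : s ≠ 0 := by
    rintro rfl
    simp at hs
  have hc : 0 < (2 * Real.pi * s : ℂ).re := by
    have : (2 * Real.pi * s : ℂ).re = 2 * Real.pi * s.re := by simp
    rw [this]; positivity
  have hF : 𝓕 (gFun (2 * Real.pi * s)) =
      fun w : ℝ => 2 / Real.pi * s ^ 3 * (((w : ℂ) ^ 2 + s ^ 2) ^ 2)⁻¹ :=
    funext (gFun_fourier s hs)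
  have hinv := (gFun_int _ hc).fourierInv_fourier_eq
    (by rw [hF]; exact (kernel_int s hs).const_mul _) (gFun_cont _).continuousAt (v := v)
  rw [← hinv, hF, Real.fourierInv_eq', ← integral_const_mul]
  congr 1
  funext w
  simp only [smul_eq_mul, RCLike.inner_apply, conj_trivial]
  rw [show ((2 * Real.pi * (v * w) : ℝ) : ℂ) * Complex.I = 2 * Real.pi * v * w * Complex.I by
    push_cast; ring]
  field_simp

/-- For real `a > 0` and `λ ∉ [0,∞)`, the Lebesgue integral
`∫_ℝ sin²(ax)/(x² − λ)² dx` converges and equals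
`−(iπ/(4(√λ)³))(1 − e^{2ia√λ}) + (πa/(2λ)) e^{2ia√λ}`. -/
theorem stmt8 (a : ℝ) (ha : 0 < a) (lam : ℂ) (hlam : ∀ t : ℝ, 0 ≤ t → lam ≠ (t : ℂ)) :
    Integrable (fun x : ℝ => (Real.sin (a * x) : ℂ) ^ 2 * (((x : ℂ) ^ 2 - lam) ^ 2)⁻¹) ∧
    ∫ x : ℝ, (Real.sin (a * x) : ℂ) ^ 2 * (((x : ℂ) ^ 2 - lam) ^ 2)⁻¹
      = -(Complex.I * (Real.pi : ℂ) / (4 * (sqrtUpper lam) ^ 3)) *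
          (1 - Complex.exp (2 * Complex.I * (a : ℂ) * sqrtUpper lam))
        + (Real.pi : ℂ) * (a : ℂ) / (2 * lam) *
            Complex.exp (2 * Complex.I * (a : ℂ) * sqrtUpper lam) := by
  have hpi : (Real.pi : ℂ) ≠ 0 := by exact_mod_cast Real.pi_ne_zero
  have hlam0 : lam ≠ 0 := by simpa using hlam 0 le_rfl
  obtain ⟨s, hsd⟩ : ∃ s : ℂ, s = (-lam) ^ ((1 : ℂ) / 2) := ⟨_, rfl⟩
  have hs2 : s ^ 2 = -lam := by
    rw [hsd, one_div]
    exact Complex.cpow_nat_inv_pow (-lam) two_ne_zero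
  have hs0 : s ≠ 0 := by
    rintro rfl
    apply hlam0
    simpa using hs2
  have hs : 0 < s.re := by
    have hslit : -lam ∈ Complex.slitPlane := by
      rw [Complex.mem_slitPlane_iff]
      by_contra! hcon
      have h1 : lam.re ≥ 0 := by simpa using hcon.1
      have h2 : lam.im = 0 := by simpa using hcon.2
      exact hlam lam.re h1 (Complex.ext (by simp) (by simp [h2]))
    have harg := Complex.mem_slitPlane_iff_arg.1 hslit
    have h1 := Complex.neg_pi_lt_arg (-lam)
    have h2 := lt_of_le_of_ne (Complex.arg_le_pi (-lam)) harg.1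
    rw [hsd, Complex.cpow_def_of_ne_zero (neg_ne_zero.2 hlam0), Complex.exp_re]
    refine mul_pos (Real.exp_pos _) (Real.cos_pos_of_mem_Ioo ?_)
    have : (Complex.log (-lam) * (1 / 2)).im = (-lam).arg / 2 := by
      rw [show Complex.log (-lam) * (1 / 2) = ((1 / 2 : ℝ) : ℂ) * Complex.log (-lam) by
        push_cast; ring, Complex.im_ofReal_mul, Complex.log_im]
      ring
    rw [this]
    constructor <;> linarith
  have hl : lam = -s ^ 2 := by rw [hs2]; ring
  have hsq : sqrtUpper lam = Complex.I * s := by rw [sqrtUpper, hsd]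
  rw [hsq, hl]
  simp only [sub_neg_eq_add]
  have hK := kernel_int s hs
  have hexpI : ∀ v : ℝ, Integrable (fun w : ℝ =>
      Complex.exp (2 * Real.pi * v * w * Complex.I) * (((w : ℂ) ^ 2 + s ^ 2) ^ 2)⁻¹) := by
    intro v
    refine hK.bdd_mul (c := 1) (Continuous.aestronglyMeasurable (by fun_prop)) ?_
    filter_upwards with t
    rw [show (2 * Real.pi * v * t * Complex.I : ℂ) = ((2 * Real.pi * v * t : ℝ) : ℂ) * Complex.I by
      push_cast; ring, Complex.norm_exp_ofReal_mul_I]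
  have h0 := exp_integral s hs 0
  have h1 := exp_integral s hs (a / Real.pi)
  have h2 := exp_integral s hs (-(a / Real.pi))
  have i0 := hexpI 0
  have i1 := hexpI (a / Real.pi)
  have i2 := hexpI (-(a / Real.pi))
  have hf : (fun x : ℝ => (Real.sin (a * x) : ℂ) ^ 2 * (((x : ℂ) ^ 2 + s ^ 2) ^ 2)⁻¹) =
      fun w : ℝ => (1 / 2) * (Complex.exp (2 * Real.pi * (0 : ℝ) * w * Complex.I) *
          (((w : ℂ) ^ 2 + s ^ 2) ^ 2)⁻¹)
        - ((1 / 4) * (Complex.exp (2 * Real.pi * (a / Real.pi : ℝ) * w * Complex.I) *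
          (((w : ℂ) ^ 2 + s ^ 2) ^ 2)⁻¹)
        + (1 / 4) * (Complex.exp (2 * Real.pi * (-(a / Real.pi) : ℝ) * w * Complex.I) *
          (((w : ℂ) ^ 2 + s ^ 2) ^ 2)⁻¹)) := by
    funext w
    have e1 : (2 * Real.pi * (a / Real.pi : ℝ) * w * Complex.I : ℂ)
        = 2 * (a * w * Complex.I) := by
      push_cast; field_simp
    have e2 : (2 * Real.pi * (-(a / Real.pi) : ℝ) * w * Complex.I : ℂ)
        = 2 * (-(a * w) * Complex.I) := by
      push_cast; field_simp
    have e3 : Complex.exp (-(a * w) * Complex.I) * Complex.exp (a * w * Complex.I) = 1 := by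
      rw [← Complex.exp_add]; simp
    rw [e1, e2, two_mul (_ * Complex.I), two_mul (_ * Complex.I), Complex.exp_add,
      Complex.exp_add, Complex.ofReal_sin, Complex.sin]
    push_cast
    simp only [mul_zero, zero_mul, Complex.exp_zero]
    generalize Complex.exp (-(a * w) * Complex.I) = p at *
    generalize Complex.exp (a * w * Complex.I) = q at *
    generalize (((w : ℂ) ^ 2 + s ^ 2) ^ 2)⁻¹ = K
    linear_combination ((p - q) ^ 2 * K / 4) * Complex.I_sq + (K / 2) * e3
  have j0 := i0.const_mul (1 / 2)
  have j1 := i1.const_mul (1 / 4)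
  have j2 := i2.const_mul (1 / 4)
  have j12 := j1.add j2
  rw [hf]
  refine ⟨j0.sub (j1.add j2), ?_⟩
  rw [integral_sub j0 (by simpa only [Pi.add_def] using j12), integral_add j1 j2, integral_const_mul, integral_const_mul,
    integral_const_mul, h0, h1, h2]
  have hap : 0 < a / Real.pi := div_pos ha Real.pi_pos
  simp only [gFun, abs_neg, abs_of_pos hap, abs_zero]
  have e1 : 2 * (Real.pi : ℂ) * s * ((a / Real.pi : ℝ) : ℂ) = 2 * s * a := by
    push_cast; field_simp
  have e2 : 2 * Complex.I * (a : ℂ) * (Complex.I * s) = -(2 * s * a) := by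
    linear_combination 2 * a * s * Complex.I_sq
  have e3 : (Complex.I * s) ^ 3 = -Complex.I * s ^ 3 := by
    linear_combination Complex.I * s ^ 3 * Complex.I_sq
  rw [neg_mul, neg_mul, e1, e2, e3]
  simp only [Complex.ofReal_zero, mul_zero, neg_zero, Complex.exp_zero]
  have hI := Complex.I_ne_zero
  field_simp
  ring
end

section
/- Let b > 0 and τ > 0 be real and set z = τ/(2πb). Then the Lebesgue integral ∫₀^∞ log(1 − e^{−τv}) / (1 + b²v²) dv converges and −(b/π) ∫₀^∞ log(1 − e^{−τv}) / (1 + b²v²) dv = log Γ(z) − (z − 1/2) log z + z − (1/2) log(2π). (The left side is, up to sign, the relative Dedekind eta function log η(τ; −Δ^{g_R}, −Δ⁰) = ∫₀^∞ log(1 − e^{−τv}) e(v) dv for the delta-perturbed Laplacian on the real line, whose relative spectral measure is e(v) = −b/(π(1 + b²v²)) with b = 1/(π g_R).) -/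
open MeasureTheory

noncomputable def bkern (n : ℕ) (u : ℝ) : ℝ := 2 / (u ^ 2 + 4 * Real.pi ^ 2 * (n + 1) ^ 2)

noncomputable def bsum (u : ℝ) : ℝ := (1 / u) * (1 / (Real.exp u - 1) - 1 / u + 1 / 2)

lemma bkern_pos (n : ℕ) (u : ℝ) : 0 < bkern n u := by
  unfold bkern; have := Real.pi_pos; positivity

lemma bkern_le (n : ℕ) (u : ℝ) : bkern n u ≤ 1 / (n + 1 : ℝ) ^ 2 := by
  unfold bkern
  have := Real.pi_gt_three
  rw [div_le_div_iff₀ (by positivity) (by positivity)]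
  have h : (0 : ℝ) < (n + 1 : ℝ) ^ 2 := by positivity
  nlinarith [sq_nonneg u, mul_pos h (by nlinarith : (0 : ℝ) < Real.pi ^ 2 - 1)]

lemma bkern_cont (n : ℕ) : Continuous (bkern n) := by
  unfold bkern
  have := Real.pi_pos
  exact continuous_const.div (by fun_prop) (fun u => by positivity)

lemma bkern_hasSum (u : ℝ) (hu : 0 < u) : HasSum (fun n => bkern n u) (bsum u) := by
  have hpi : (Real.pi : ℂ) ≠ 0 := by exact_mod_cast Real.pi_ne_zero
  have huc : (u : ℂ) ≠ 0 := by exact_mod_cast hu.ne'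
  set x : ℂ := Complex.I * ((u / (2 * Real.pi) : ℝ) : ℂ) with hx
  have him : x.im = u / (2 * Real.pi) := by
    rw [hx, Complex.mul_im, Complex.ofReal_re, Complex.ofReal_im]; simp
  have hxm : x ∈ Complex.integerComplement := by
    rintro ⟨k, hk⟩
    have h1 : x.im = 0 := by rw [← hk]; simp
    rw [him] at h1
    have : 0 < u / (2 * Real.pi) := div_pos hu (by positivity)
    linarith
  have hs := (summable_cotTerm hxm).hasSum
  have hs' : HasSum (fun n : ℕ => cotTerm x n) (Real.pi * Complex.cot (Real.pi * x) - 1 / x) := by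
    rw [cot_series_rep' hxm]; exact hs
  have he : Complex.exp (2 * Real.pi * Complex.I * x) = ((Real.exp (-u) : ℝ) : ℂ) := by
    rw [Complex.ofReal_exp]
    congr 1
    rw [hx]; push_cast; field_simp
    rw [Complex.I_sq]
  rw [Complex.cot_pi_eq_exp_ratio, he] at hs'
  have h2 := hs'.mul_left ((-(2 * Real.pi * Complex.I * u))⁻¹)
  rw [← Complex.hasSum_ofReal]
  convert! h2 using 1
  · ext n
    have hd : (x + (n + 1)) * (x - (n + 1)) = -(((u ^ 2 + 4 * Real.pi ^ 2 * (n + 1) ^ 2 : ℝ) : ℂ)) / (4 * Real.pi ^ 2) := by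
      rw [hx]; push_cast; field_simp; ring_nf; rw [Complex.I_sq]; ring
    rw [cotTerm_identity hxm, hd]
    have : ((u ^ 2 + 4 * Real.pi ^ 2 * (n + 1) ^ 2 : ℝ) : ℂ) ≠ 0 := by
      have := Real.pi_pos
      have : (u ^ 2 + 4 * Real.pi ^ 2 * (n + 1) ^ 2 : ℝ) ≠ 0 := by positivity
      exact_mod_cast this
    rw [hx]; unfold bkern
    rw [Complex.ofReal_div]
    set D := ((u ^ 2 + 4 * Real.pi ^ 2 * (n + 1) ^ 2 : ℝ) : ℂ)
    push_cast
    have hI := Complex.I_ne_zero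
    field_simp
    norm_num
  · have h1 : ((Real.exp u : ℝ) : ℂ) - 1 ≠ 0 := by
      have : Real.exp u - 1 ≠ 0 := by have := Real.add_one_lt_exp hu.ne'; linarith
      exact_mod_cast this
    have h0 : ((Real.exp u : ℝ) : ℂ) ≠ 0 := by exact_mod_cast (Real.exp_pos u).ne'
    rw [Real.exp_neg]
    unfold bsum
    rw [hx]
    push_cast at h1 h0 ⊢
    set E := Complex.exp u
    have h3 : 1 - E⁻¹ ≠ 0 := by
      intro h; apply h1; field_simp at h; simpa using h
    have e1 : (E⁻¹ + 1) / (Complex.I * (1 - E⁻¹)) = - Complex.I * (E + 1) / (E - 1) := by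
      have hI := Complex.I_ne_zero
      rw [div_eq_div_iff (mul_ne_zero hI h3) h1]
      field_simp
      rw [Complex.I_sq]; ring
    rw [e1]
    have hI := Complex.I_ne_zero
    field_simp
    ring_nf
    try simp only [Complex.I_sq]
    try ring

lemma inner_int (u : ℝ) (hu : 0 < u) :
    ∫ x in (0:ℝ)..1, (1 / 2 - x) * Real.exp (-(x * u)) = (1 - Real.exp (-u)) * bsum u := by
  have h : ∀ x ∈ Set.uIcc (0:ℝ) 1, HasDerivAt
      (fun x : ℝ => Real.exp (-(x * u)) * ((x - 1 / 2) / u + 1 / u ^ 2))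
      ((1 / 2 - x) * Real.exp (-(x * u))) x := by
    intro x _
    have h1 : HasDerivAt (fun x : ℝ => Real.exp (-(x * u))) (Real.exp (-(x * u)) * (-(1 * u))) x :=
      (((hasDerivAt_id x).mul_const u).neg).exp
    have h2 : HasDerivAt (fun x : ℝ => (x - 1 / 2) / u + 1 / u ^ 2) (1 / u) x :=
      (((hasDerivAt_id x).sub_const (1 / 2)).div_const u).add_const _
    convert! h1.mul h2 using 1
    field_simp
    ring
  rw [intervalIntegral.integral_eq_sub_of_hasDerivAt h
    (Continuous.intervalIntegrable (by fun_prop) _ _)]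
  have h1 : Real.exp u - 1 ≠ 0 := by have := Real.add_one_lt_exp hu.ne'; linarith
  simp only [bsum, one_mul, zero_mul, neg_zero, Real.exp_zero, Real.exp_neg]
  have := (Real.exp_pos u).ne'
  field_simp
  ring

lemma outer_int (z : ℝ) (hz : 0 < z) :
    ∫ x in (0:ℝ)..1, (1 / 2 - x) * (1 / (x + z)) = (z + 1 / 2) * (Real.log (z + 1) - Real.log z) - 1 := by
  have h : ∀ x ∈ Set.uIcc (0:ℝ) 1, HasDerivAt
      (fun x : ℝ => (z + 1 / 2) * Real.log (x + z) - x)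
      ((1 / 2 - x) * (1 / (x + z))) x := by
    intro x hx
    rw [Set.uIcc_of_le zero_le_one] at hx
    have hp : x + z ≠ 0 := by linarith [hx.1]
    convert! ((((hasDerivAt_id x).add_const z).log hp).const_mul (z + 1 / 2)).sub
      (hasDerivAt_id x) using 1
    simp only [id]
    field_simp
    ring
  rw [intervalIntegral.integral_eq_sub_of_hasDerivAt h]
  · rw [add_comm 1 z, zero_add]; ring
  · apply ContinuousOn.intervalIntegrable
    intro x hx
    rw [Set.uIcc_of_le zero_le_one] at hx
    have hp : x + z ≠ 0 := by linarith [hx.1]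
    exact ContinuousAt.continuousWithinAt (by fun_prop (disch := assumption))

lemma exp_int (z : ℝ) (hz : 0 < z) : ∫ u in Set.Ioi (0:ℝ), Real.exp (-(z * u)) = 1 / z := by
  have := integral_exp_mul_Ioi (a := -z) (by linarith) 0
  simp only [neg_mul] at this
  rw [this]; simp

lemma exp_intble (z : ℝ) (hz : 0 < z) :
    IntegrableOn (fun u => Real.exp (-(z * u))) (Set.Ioi (0:ℝ)) := by
  simpa only [neg_mul] using exp_neg_integrableOn_Ioi 0 hz

lemma swap_int (z : ℝ) (hz : 0 < z) :
    ∫ u in Set.Ioi (0:ℝ), Real.exp (-(z * u)) * ((1 - Real.exp (-u)) * bsum u)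
      = (z + 1 / 2) * (Real.log (z + 1) - Real.log z) - 1 := by
  rw [← outer_int z hz]
  have e1 : ∫ u in Set.Ioi (0:ℝ), Real.exp (-(z * u)) * ((1 - Real.exp (-u)) * bsum u)
      = ∫ u in Set.Ioi (0:ℝ), ∫ x in Set.Ioc (0:ℝ) 1,
        Real.exp (-(z * u)) * ((1 / 2 - x) * Real.exp (-(x * u))) := by
    apply setIntegral_congr_fun measurableSet_Ioi
    intro u hu
    simp only
    rw [← inner_int u hu, intervalIntegral.integral_of_le zero_le_one, integral_const_mul]
  rw [e1, integral_integral_swap, intervalIntegral.integral_of_le zero_le_one]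
  · apply setIntegral_congr_fun measurableSet_Ioc
    intro x hx
    simp only
    rw [← exp_int (x + z) (by linarith [hx.1]), ← integral_const_mul]
    congr 1
    ext u
    rw [show -((x + z) * u) = -(z * u) + -(x * u) by ring, Real.exp_add]
    ring
  · have hd : Integrable (fun p : ℝ × ℝ => Real.exp (-(z * p.1)) * (1:ℝ))
        ((volume.restrict (Set.Ioi (0:ℝ))).prod (volume.restrict (Set.Ioc (0:ℝ) 1))) :=
      Integrable.mul_prod (exp_intble z hz) (integrable_const (1:ℝ))
    refine hd.mono' (Continuous.aestronglyMeasurable (by unfold Function.uncurry; fun_prop)) ?_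
    rw [Measure.prod_restrict]
    filter_upwards [ae_restrict_mem (measurableSet_Ioi.prod measurableSet_Ioc)] with p hp
    obtain ⟨hu, hx⟩ := hp
    simp only [Function.uncurry, norm_mul, Real.norm_eq_abs, Real.abs_exp]
    have h1 : |1 / 2 - p.2| ≤ 1 := by rw [abs_le]; constructor <;> linarith [hx.1, hx.2]
    have h2 : Real.exp (-(p.2 * p.1)) ≤ 1 := by
      rw [Real.exp_le_one_iff]
      have := mul_pos hx.1 hu
      linarith
    gcongr
    exact mul_le_one₀ h1 (Real.exp_pos _).le h2

noncomputable def bterm (z : ℝ) (n : ℕ) : ℝ := ∫ u in Set.Ioi (0:ℝ), Real.exp (-(z * u)) * bkern n u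

lemma bint (z : ℝ) (hz : 0 < z) (n : ℕ) :
    IntegrableOn (fun u => Real.exp (-(z * u)) * bkern n u) (Set.Ioi (0:ℝ)) := by
  refine Integrable.mono' ((exp_intble z hz).mul_const (1 / (n + 1 : ℝ) ^ 2))
    (((by fun_prop : Continuous fun u => Real.exp (-(z * u))).mul (bkern_cont n)).aestronglyMeasurable) ?_
  filter_upwards with u
  rw [norm_mul, Real.norm_eq_abs, Real.abs_exp, Real.norm_of_nonneg (bkern_pos n u).le]
  have := bkern_le n u
  gcongr

lemma bterm_le (z : ℝ) (hz : 0 < z) (n : ℕ) : bterm z n ≤ 1 / z * (1 / (n + 1 : ℝ) ^ 2) := by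
  unfold bterm
  rw [← exp_int z hz, ← integral_mul_const]
  apply integral_mono (bint z hz n) ((exp_intble z hz).mul_const _)
  intro u
  have := bkern_le n u
  simp only
  gcongr

lemma bterm_pos (z : ℝ) (hz : 0 < z) (n : ℕ) : 0 < bterm z n := by
  unfold bterm
  rw [setIntegral_pos_iff_support_of_nonneg_ae]
  · have : Function.support (fun u => Real.exp (-(z * u)) * bkern n u) = Set.univ := by
      ext u; simp [(bkern_pos n u).ne']
    rw [this]; simp
  · filter_upwards with u
    exact mul_nonneg (Real.exp_pos _).le (bkern_pos n u).le
  · exact bint z hz n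

lemma sum_sq : Summable (fun n : ℕ => 1 / (n + 1 : ℝ) ^ 2) := by
  have := (summable_nat_add_iff 1).mpr (Real.summable_one_div_nat_pow.mpr one_lt_two)
  simpa using this

lemma bterm_summable (z : ℝ) (hz : 0 < z) : Summable (bterm z) :=
  Summable.of_nonneg_of_le (fun n => (bterm_pos z hz n).le) (bterm_le z hz) (sum_sq.mul_left _)

lemma bterm_hasSum (z : ℝ) (hz : 0 < z) :
    HasSum (bterm z) (∫ u in Set.Ioi (0:ℝ), Real.exp (-(z * u)) * bsum u) := by
  have h := hasSum_integral_of_summable_integral_norm (μ := volume.restrict (Set.Ioi (0:ℝ)))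
    (F := fun n u => Real.exp (-(z * u)) * bkern n u) (bint z hz) (by
      convert! bterm_summable z hz using 1
      ext n
      unfold bterm
      congr 1
      ext u
      exact Real.norm_of_nonneg (mul_nonneg (Real.exp_pos _).le (bkern_pos n u).le))
  convert! h using 1
  apply setIntegral_congr_fun measurableSet_Ioi
  intro u hu
  exact ((bkern_hasSum u hu).mul_left _).tsum_eq.symm

lemma tsum_bterm_pos (z : ℝ) (hz : 0 < z) : 0 < ∑' n, bterm z n :=
  (bterm_summable z hz).tsum_pos (fun n => (bterm_pos z hz n).le) 0 (bterm_pos z hz 0)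

lemma bsum_intble (z : ℝ) (hz : 0 < z) :
    IntegrableOn (fun u => Real.exp (-(z * u)) * bsum u) (Set.Ioi (0:ℝ)) := by
  apply Integrable.of_integral_ne_zero
  rw [← (bterm_hasSum z hz).tsum_eq]
  exact (tsum_bterm_pos z hz).ne'

noncomputable def bF (z : ℝ) : ℝ := ∑' n, bterm z n

lemma bF_diff (z : ℝ) (hz : 0 < z) :
    bF z - bF (z + 1) = (z + 1 / 2) * (Real.log (z + 1) - Real.log z) - 1 := by
  unfold bF
  rw [(bterm_hasSum z hz).tsum_eq, (bterm_hasSum (z + 1) (by linarith)).tsum_eq,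
    ← integral_sub (bsum_intble z hz) (bsum_intble (z + 1) (by linarith)), ← swap_int z hz]
  congr 1
  ext u
  rw [show -((z + 1) * u) = -(z * u) + -u by ring, Real.exp_add]
  ring

lemma bF_tendsto (z : ℝ) (hz : 0 < z) :
    Filter.Tendsto (fun n : ℕ => bF (z + ((n + 1 : ℕ) : ℝ))) Filter.atTop (nhds 0) := by
  have hp : ∀ n : ℕ, 0 < z + ((n + 1 : ℕ) : ℝ) := fun n => by positivity
  have h1 : Filter.Tendsto (fun n : ℕ => z + ((n + 1 : ℕ) : ℝ)) Filter.atTop Filter.atTop :=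
    Filter.tendsto_atTop_add_const_left _ _
      ((Filter.tendsto_add_atTop_iff_nat 1).mpr tendsto_natCast_atTop_atTop)
  have h2 := (h1.inv_tendsto_atTop).mul_const (∑' n : ℕ, 1 / (n + 1 : ℝ) ^ 2)
  rw [zero_mul] at h2
  refine squeeze_zero (fun n => (tsum_bterm_pos _ (hp n)).le) (fun n => ?_) h2
  unfold bF
  simp only [Pi.inv_apply]
  rw [← tsum_mul_left]
  refine (bterm_summable _ (hp n)).tsum_le_tsum (fun k => ?_) (sum_sq.mul_left _)
  rw [← one_div]
  exact bterm_le _ (hp n) k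

noncomputable def bG (z : ℝ) : ℝ := Real.log (Real.Gamma z) - (z - 1 / 2) * Real.log z + z
        - (1 / 2) * Real.log (2 * Real.pi)

lemma logGamma_feq {y : ℝ} (hy : 0 < y) :
    Real.log (Real.Gamma (y + 1)) = Real.log (Real.Gamma y) + Real.log y := by
  rw [Real.Gamma_add_one hy.ne', Real.log_mul hy.ne' (Real.Gamma_pos_of_pos hy).ne', add_comm]

lemma bG_diff (z : ℝ) (hz : 0 < z) :
    bG z - bG (z + 1) = (z + 1 / 2) * (Real.log (z + 1) - Real.log z) - 1 := by
  unfold bG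
  rw [logGamma_feq hz]
  ring

lemma bG_tendsto (z : ℝ) (hz : 0 < z) :
    Filter.Tendsto (fun n : ℕ => bG (z + ((n + 1 : ℕ) : ℝ))) Filter.atTop (nhds 0) := by
  have h1 := Real.BohrMollerup.tendsto_log_gamma hz
  have h2 : Filter.Tendsto (fun n => Real.log (Stirling.stirlingSeq n)) Filter.atTop
      (nhds (Real.log (Real.sqrt Real.pi))) :=
    Stirling.tendsto_stirlingSeq_sqrt_pi.log (by have := Real.pi_pos; positivity)
  have h3 := (Real.tendsto_mul_log_one_add_div_atTop (z + 1)).comp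
    (tendsto_natCast_atTop_atTop (R := ℝ))
  have h4 : Filter.Tendsto (fun n : ℕ => Real.log (1 + (z + 1) / (n : ℝ))) Filter.atTop
      (nhds 0) := by
    have : Filter.Tendsto (fun n : ℕ => 1 + (z + 1) / (n : ℝ)) Filter.atTop (nhds (1 + 0)) :=
      (tendsto_const_div_atTop_nhds_zero_nat (z + 1)).const_add 1
    rw [add_zero] at this
    simpa using this.log one_ne_zero
  have h5 := ((((tendsto_const_nhds (x := Real.log (Real.Gamma z))).sub h1).add h2).sub h3).sub
    (h4.const_mul (z + 1 / 2))
  have h6 := h5.add_const (z + 1 + 1 / 2 * Real.log 2 - 1 / 2 * Real.log (2 * Real.pi))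
  have e : Real.log (Real.Gamma z) - Real.log (Real.Gamma z) + Real.log (Real.sqrt Real.pi)
      - (z + 1) - (z + 1 / 2) * 0 + (z + 1 + 1 / 2 * Real.log 2 - 1 / 2 * Real.log (2 * Real.pi)) = 0 := by
    rw [Real.log_sqrt Real.pi_pos.le, Real.log_mul two_ne_zero Real.pi_ne_zero]
    ring
  rw [e] at h6
  refine h6.congr' ?_
  filter_upwards [Filter.eventually_gt_atTop 0] with n hn
  have hn' : (0:ℝ) < n := by exact_mod_cast hn
  have h7 := Real.BohrMollerup.f_add_nat_eq (f := fun x => Real.log (Real.Gamma x))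
    (fun {y} hy => logGamma_feq hy) hz (n + 1)
  have h8 : Real.log (1 + (z + 1) / (n : ℝ)) = Real.log (z + ((n + 1 : ℕ) : ℝ)) - Real.log n := by
    rw [← Real.log_div (by positivity) hn'.ne']
    congr 1
    push_cast
    field_simp
    ring
  unfold bG
  rw [h7, Stirling.log_stirlingSeq_formula, Real.BohrMollerup.logGammaSeq, Function.comp_apply, h8,
    Real.log_div hn'.ne' (Real.exp_pos 1).ne', Real.log_exp, Real.log_mul two_ne_zero hn'.ne']
  push_cast
  ring

lemma bF_eq_bG (z : ℝ) (hz : 0 < z) : bF z = bG z := by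
  have hper : ∀ n : ℕ, bF (z + n) - bG (z + n) = bF z - bG z := by
    intro n
    induction n with
    | zero => simp
    | succ n ih =>
      have hp : 0 < z + n := by positivity
      have h1 := bF_diff _ hp
      have h2 := bG_diff _ hp
      push_cast
      rw [← add_assoc]
      linarith
  have h := (bF_tendsto z hz).sub (bG_tendsto z hz)
  simp only [hper, sub_zero] at h
  have := tendsto_nhds_unique h tendsto_const_nhds
  linarith

/-- the terms of the expansion of the original integrand -/
noncomputable def oterm (b τ : ℝ) (n : ℕ) (v : ℝ) : ℝ :=
  Real.exp (-(τ * v)) ^ (n + 1) / (n + 1) / (1 + b ^ 2 * v ^ 2)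

lemma oterm_eq (b τ : ℝ) (hb : 0 < b) (z : ℝ) (hz : z = τ / (2 * Real.pi * b)) (n : ℕ) (v : ℝ) :
    oterm b τ n v = (2 * Real.pi ^ 2 * (n + 1)) *
      (Real.exp (-(z * (2 * Real.pi * (n + 1) * b * v))) * bkern n (2 * Real.pi * (n + 1) * b * v)) := by
  have hpi := Real.pi_pos
  unfold oterm bkern
  rw [← Real.exp_nat_mul]
  have : ((n + 1 : ℕ) : ℝ) * -(τ * v) = -(z * (2 * Real.pi * (n + 1) * b * v)) := by
    rw [hz]; push_cast; field_simp
  rw [this, show (2 * Real.pi * (n + 1) * b * v) ^ 2 + 4 * Real.pi ^ 2 * ((n:ℝ) + 1) ^ 2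
    = 4 * Real.pi ^ 2 * ((n:ℝ) + 1) ^ 2 * (1 + b ^ 2 * v ^ 2) by ring]
  have : 0 < 1 + b ^ 2 * v ^ 2 := by positivity
  field_simp
  try norm_num

theorem stmt19 (b τ : ℝ) (hb : 0 < b) (hτ : 0 < τ) (z : ℝ)
    (hz : z = τ / (2 * Real.pi * b)) :
    IntegrableOn (fun v : ℝ => Real.log (1 - Real.exp (-(τ * v))) / (1 + b ^ 2 * v ^ 2))
      (Set.Ioi 0) ∧
    -(b / Real.pi) *
        ∫ v in Set.Ioi (0 : ℝ), Real.log (1 - Real.exp (-(τ * v))) / (1 + b ^ 2 * v ^ 2)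
      = Real.log (Real.Gamma z) - (z - 1 / 2) * Real.log z + z
        - (1 / 2) * Real.log (2 * Real.pi) := by
  have hpi := Real.pi_pos
  have hz0 : 0 < z := by rw [hz]; positivity
  have hc : ∀ n : ℕ, 0 < 2 * Real.pi * (n + 1) * b := fun n => by positivity
  have hval : ∀ n, ∫ v in Set.Ioi (0:ℝ), oterm b τ n v = Real.pi / b * bterm z n := by
    intro n
    simp_rw [oterm_eq b τ hb z hz n]
    rw [integral_const_mul, integral_comp_mul_left_Ioi
      (fun u => Real.exp (-(z * u)) * bkern n u) 0 (hc n), mul_zero, smul_eq_mul]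
    unfold bterm
    field_simp
  have hint : ∀ n, IntegrableOn (oterm b τ n) (Set.Ioi (0:ℝ)) := by
    intro n
    rw [show oterm b τ n = _ from funext (oterm_eq b τ hb z hz n)]
    apply Integrable.const_mul
    have := (integrableOn_Ioi_comp_mul_left_iff
      (fun u => Real.exp (-(z * u)) * bkern n u) 0 (hc n)).mpr
    rw [mul_zero] at this
    exact this (bint z hz0 n)
  have hnorm : ∀ n v, ‖oterm b τ n v‖ = oterm b τ n v := fun n v =>
    Real.norm_of_nonneg (by unfold oterm; positivity)
  have hS := hasSum_integral_of_summable_integral_norm (μ := volume.restrict (Set.Ioi (0:ℝ)))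
    (F := oterm b τ) hint (by
      simp_rw [hnorm, hval]
      exact (bterm_summable z hz0).mul_left _)
  have hI : ∫ v in Set.Ioi (0:ℝ), ∑' n, oterm b τ n v =
      ∫ v in Set.Ioi (0:ℝ), -(Real.log (1 - Real.exp (-(τ * v))) / (1 + b ^ 2 * v ^ 2)) := by
    apply setIntegral_congr_fun measurableSet_Ioi
    intro v hv
    have hv' : 0 < τ * v := mul_pos hτ hv
    have := (Real.hasSum_pow_div_log_of_abs_lt_one (x := Real.exp (-(τ * v)))
      (by rw [Real.abs_exp, Real.exp_lt_one_iff]; linarith)).div_const (1 + b ^ 2 * v ^ 2)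
    simp only
    rw [← neg_div]
    exact this.tsum_eq
  rw [hI, integral_neg] at hS
  simp_rw [hval] at hS
  have hE := hS.unique ((bterm_summable z hz0).hasSum.mul_left (Real.pi / b))
  have hpos := tsum_bterm_pos z hz0
  constructor
  · apply Integrable.of_integral_ne_zero
    intro h
    rw [h, neg_zero] at hE
    have : 0 < Real.pi / b * ∑' n, bterm z n := by positivity
    linarith
  · have hFG := bF_eq_bG z hz0
    unfold bF bG at hFG
    rw [← hFG, neg_mul, ← mul_neg, hE]
    field_simp
end
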